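/- The sequence of density values (f(y_j))_{j≥1} along the mean shift sequence is non-decreasing and bounded above, hence convergent. -/

import Mathlib

open Filter Finset

/-!
Convexity puts the profile `k` above its tangent lines, so replacing each `k (‖w - xᵢ‖² / h²)` by
its tangent at `‖z - xᵢ‖² / h²` minorizes the density by a concave quadratic in `w` that touches it
at `w = z`. The weights of this quadratic are `g (‖z - xᵢ‖² / h²)`, so its maximizer is the weighted
mean of the data, which is the mean shift of `z`. The Huygens–Steiner identity computes the gain.
Moreover `k` is decreasing, so the density never exceeds its value for `k` replaced by `k 0`.
-/

theorem add_mul_sub_le_of_convexOn_of_hasDerivWithinAt {S : Set ℝ} {φ : ℝ → ℝ} {φ' a b : ℝ}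
    (hφ : ConvexOn ℝ S φ) (ha : a ∈ S) (hb : b ∈ S) (hφ' : HasDerivWithinAt φ φ' S a) :
    φ a + φ' * (b - a) ≤ φ b := by
  rcases lt_trichotomy a b with hab | rfl | hba
  · have slope_bound := hφ.le_slope_of_hasDerivWithinAt ha hb hab hφ'
    rw [slope_def_field, le_div_iff₀ (sub_pos.2 hab)] at slope_bound
    linarith
  · simp
  · have slope_bound := hφ.slope_le_of_hasDerivWithinAt hb ha hba hφ'
    rw [slope_def_field, div_le_iff₀ (sub_pos.2 hba)] at slope_bound
    linarith

theorem sum_smul_centerMass_sub_eq_zero {R ι E : Type*} [Field R] [AddCommGroup E] [Module R E]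
    {s : Finset ι} {w : ι → R} (hw : ∑ i ∈ s, w i ≠ 0) (x : ι → E) :
    ∑ i ∈ s, w i • (s.centerMass w x - x i) = 0 := by
  simp only [smul_sub, sum_sub_distrib, ← sum_smul]
  rw [Finset.centerMass, smul_inv_smul₀ hw, sub_self]

section NormedSpace

variable {ι E : Type*} [Fintype ι] [SeminormedAddCommGroup E] [NormedSpace ℝ E]

/-- The kernel density estimate at `z` of the sample `x`, with bandwidth `h`, radial profile `k` and
normalization constant `c`. The exponent of `h` is the dimension of the ambient space, so that the
one-dimensional factor is `c / (n h)`; in infinite dimension the exponent is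
`0`, by the convention for `Module.finrank`. -/
noncomputable def kernelDensity (c h : ℝ) (k : ℝ → ℝ) (x : ι → E) (z : E) : ℝ :=
  c / (Fintype.card ι * h ^ Module.finrank ℝ E) * ∑ i, k ((‖z - x i‖ / h) ^ 2)

/-- The mean shift of `z`: the mean of the sample `x`, each point being weighted by the value of `g`
at its squared distance from `z` in units of the bandwidth `h`. -/
noncomputable def meanShift (g : ℝ → ℝ) (h : ℝ) (x : ι → E) (z : E) : E :=
  univ.centerMass (fun i ↦ g ((‖z - x i‖ / h) ^ 2)) x

theorem kernelDensity_real (c h : ℝ) (k : ℝ → ℝ) (x : ι → ℝ) (z : ℝ) :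
    kernelDensity c h k x z = c / (Fintype.card ι * h) * ∑ i, k (((z - x i) / h) ^ 2) := by
  simp only [kernelDensity, Module.finrank_self, pow_one, div_pow, Real.norm_eq_abs, sq_abs]

theorem meanShift_real (g : ℝ → ℝ) (h : ℝ) (x : ι → ℝ) (z : ℝ) :
    meanShift g h x z =
      (∑ i, x i * g (((z - x i) / h) ^ 2)) / ∑ i, g (((z - x i) / h) ^ 2) := by
  simp only [meanShift, Finset.centerMass, smul_eq_mul, div_pow, Real.norm_eq_abs, sq_abs,
    mul_comm (x _)]
  exact inv_mul_eq_div _ _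

theorem bddAbove_range_kernelDensity {c h : ℝ} {k : ℝ → ℝ} (hc : 0 ≤ c) (hh : 0 ≤ h)
    (hk : BddAbove (k '' Set.Ici 0)) (x : ι → E) :
    BddAbove (Set.range (kernelDensity c h k x)) := by
  obtain ⟨M, hM⟩ := hk
  refine ⟨c / (Fintype.card ι * h ^ Module.finrank ℝ E) * ∑ _i : ι, M, ?_⟩
  rintro _ ⟨z, rfl⟩
  refine mul_le_mul_of_nonneg_left (sum_le_sum fun i _ ↦ ?_) (by positivity)
  exact hM (Set.mem_image_of_mem k (sq_nonneg (‖z - x i‖ / h)))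

end NormedSpace

section InnerProductSpace

variable {ι E : Type*} [SeminormedAddCommGroup E] [InnerProductSpace ℝ E]

theorem sum_mul_norm_sub_sq_eq_centerMass_add {s : Finset ι} {w : ι → ℝ}
    (hw : ∑ i ∈ s, w i ≠ 0) (x : ι → E) (z : E) :
    ∑ i ∈ s, w i * ‖z - x i‖ ^ 2 =
      ∑ i ∈ s, w i * ‖s.centerMass w x - x i‖ ^ 2 +
        (∑ i ∈ s, w i) * ‖z - s.centerMass w x‖ ^ 2 := by
  set m := s.centerMass w x with hm
  have cross_term : ∑ i ∈ s, w i * inner ℝ (z - m) (m - x i) = 0 := by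
    simp only [← real_inner_smul_right, ← inner_sum]
    rw [hm, sum_smul_centerMass_sub_eq_zero hw, inner_zero_right]
  have expand (i : ι) : w i * ‖z - x i‖ ^ 2 =
      w i * ‖m - x i‖ ^ 2 + w i * ‖z - m‖ ^ 2 + 2 * (w i * inner ℝ (z - m) (m - x i)) := by
    rw [← sub_add_sub_cancel z m (x i), norm_add_sq_real]
    ring
  simp only [expand, sum_add_distrib, ← mul_sum, ← sum_mul, cross_term, mul_zero, add_zero]

variable [Fintype ι] {c h : ℝ} {k g : ℝ → ℝ}

theorem sum_mul_sub_meanShift_eq (x : ι → E) (z : E)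
    (hw : ∑ i, g ((‖z - x i‖ / h) ^ 2) ≠ 0) :
    ∑ i, g ((‖z - x i‖ / h) ^ 2) *
        ((‖z - x i‖ / h) ^ 2 - (‖meanShift g h x z - x i‖ / h) ^ 2) =
      (∑ i, g ((‖z - x i‖ / h) ^ 2)) * (‖z - meanShift g h x z‖ / h) ^ 2 := by
  have steiner := sum_mul_norm_sub_sq_eq_centerMass_add hw x z
  rw [← meanShift, ← sub_eq_iff_eq_add'] at steiner
  simp only [div_pow _ h] at steiner ⊢
  rw [← mul_div_assoc, ← steiner]
  simp only [← sub_div, ← mul_div_assoc, ← sum_div, mul_sub, sum_sub_distrib]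

theorem sum_profile_add_le_sum_profile_meanShift (hk : ConvexOn ℝ (Set.Ici 0) k)
    (hkg : ∀ t ∈ Set.Ici (0 : ℝ), HasDerivWithinAt k (-g t) (Set.Ici 0) t) (x : ι → E) (z : E)
    (hw : ∑ i, g ((‖z - x i‖ / h) ^ 2) ≠ 0) :
    ∑ i, k ((‖z - x i‖ / h) ^ 2) +
        (∑ i, g ((‖z - x i‖ / h) ^ 2)) * (‖z - meanShift g h x z‖ / h) ^ 2 ≤
      ∑ i, k ((‖meanShift g h x z - x i‖ / h) ^ 2) := by
  rw [← sum_mul_sub_meanShift_eq x z hw, ← sum_add_distrib]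
  refine sum_le_sum fun i _ ↦ ?_
  have tangent := add_mul_sub_le_of_convexOn_of_hasDerivWithinAt hk
    (sq_nonneg (‖z - x i‖ / h)) (sq_nonneg (‖meanShift g h x z - x i‖ / h))
    (hkg _ (sq_nonneg (‖z - x i‖ / h)))
  linarith

theorem kernelDensity_le_kernelDensity_meanShift [Nonempty ι] (hc : 0 ≤ c) (hh : 0 ≤ h)
    (hk : ConvexOn ℝ (Set.Ici 0) k)
    (hkg : ∀ t ∈ Set.Ici (0 : ℝ), HasDerivWithinAt k (-g t) (Set.Ici 0) t)
    (hg : ∀ t ∈ Set.Ici (0 : ℝ), 0 < g t) (x : ι → E) (z : E) :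
    kernelDensity c h k x z ≤ kernelDensity c h k x (meanShift g h x z) := by
  have weight_pos : 0 < ∑ i, g ((‖z - x i‖ / h) ^ 2) :=
    sum_pos (fun i _ ↦ hg _ (sq_nonneg (‖z - x i‖ / h))) univ_nonempty
  refine mul_le_mul_of_nonneg_left ?_ (by positivity)
  exact (le_add_of_nonneg_right (by positivity)).trans
    (sum_profile_add_le_sum_profile_meanShift hk hkg x z weight_pos.ne')

theorem mean_shift_density_values_converge_general [Nonempty ι] (hc : 0 ≤ c) (hh : 0 < h)
    (hk : ConvexOn ℝ (Set.Ici 0) k)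
    (hkg : ∀ t ∈ Set.Ici (0 : ℝ), HasDerivWithinAt k (-g t) (Set.Ici 0) t)
    (hg : ∀ t ∈ Set.Ici (0 : ℝ), 0 < g t) (x : ι → E) {y : ℕ → E}
    (hy : ∀ j, y (j + 1) = meanShift g h x (y j)) :
    Monotone (fun j ↦ kernelDensity c h k x (y j)) ∧
      BddAbove (Set.range fun j ↦ kernelDensity c h k x (y j)) ∧
      ∃ L : ℝ, Tendsto (fun j ↦ kernelDensity c h k x (y j)) atTop (nhds L) := by
  have hmono : Monotone (fun j ↦ kernelDensity c h k x (y j)) :=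
    monotone_nat_of_le_succ fun j ↦
      hy j ▸ kernelDensity_le_kernelDensity_meanShift hc hh.le hk hkg hg x (y j)
  have profile_antitone : AntitoneOn k (Set.Ici 0) :=
    antitoneOn_of_hasDerivWithinAt_nonpos (convex_Ici 0)
      (fun t ht ↦ (hkg t ht).continuousWithinAt)
      (fun t ht ↦ (hkg t (interior_subset ht)).mono interior_subset)
      (fun t ht ↦ neg_nonpos.2 (hg t (interior_subset ht)).le)
  have profile_bdd : BddAbove (k '' Set.Ici 0) :=
    profile_antitone.map_bddBelow subset_rfl ⟨0, fun _ ht ↦ ht, Set.mem_Ici.2 le_rfl⟩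
  have hbdd : BddAbove (Set.range fun j ↦ kernelDensity c h k x (y j)) :=
    (bddAbove_range_kernelDensity hc hh.le profile_bdd x).mono
      (Set.range_comp_subset_range y (kernelDensity c h k x))
  exact ⟨hmono, hbdd, _, tendsto_atTop_ciSup hmono hbdd⟩

end InnerProductSpace

theorem mean_shift_density_values_converge
(n : ℕ) (hn : 0 < n) (x : Fin n → ℝ) (h : ℝ) (hh : 0 < h)
(c : ℝ) (hc : 0 < c)
    (k g : ℝ → ℝ)
    (hk_nonneg : ∀ t ∈ Set.Ici (0:ℝ), 0 ≤ k t)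
    (hk_conv : ConvexOn ℝ (Set.Ici 0) k)
    (hk_diff : Differentiable ℝ k)
    (hk_anti : StrictAntiOn k (Set.Ici 0))
    (hg : ∀ t, g t = -(deriv k t))
    (hg_pos : ∀ t ∈ Set.Ici (0:ℝ), 0 < g t)
    (f T : ℝ → ℝ)
    (hf : ∀ z, f z = c / (n * h) * ∑ i, k (((z - x i) / h) ^ 2))
    (hT : ∀ z, T z = (∑ i, x i * g (((z - x i) / h) ^ 2)) / (∑ i, g (((z - x i) / h) ^ 2)))
(y : ℕ → ℝ) (hy0 : ∃ i, y 0 = x i) (hyit : ∀ j, y (j + 1) = T (y j)) :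
    Monotone (fun j => f (y j)) ∧ BddAbove (Set.range (fun j => f (y j))) ∧
      ∃ L : ℝ, Tendsto (fun j => f (y j)) atTop (nhds L) := by
  have : Nonempty (Fin n) := ⟨⟨0, hn⟩⟩
  have hkg (t : ℝ) : HasDerivAt k (-g t) t := by simpa [hg] using (hk_diff t).hasDerivAt
  have f_eq : f = kernelDensity c h k x :=
    funext fun z ↦ by rw [hf, kernelDensity_real, Fintype.card_fin]
  have T_eq : T = meanShift g h x := funext fun z ↦ by rw [hT, meanShift_real]
  subst f_eq T_eq
  exact mean_shift_density_values_converge_general hc.le hh hk_conv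
    (fun t _ ↦ (hkg t).hasDerivWithinAt) hg_pos x hyit
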